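/- arXiv:2303.05395 — 2 statements merged into one kernel-verified Lean document; each statement's English description precedes it below -/
import Mathlib

section
/- (Sylvester's theorem) For all integers m ≥ n ≥ 1, the product P(m,n) = ∏_{i=1}^{n}(m+i) of n consecutive integers each strictly greater than n is divisible by at least one prime strictly greater than n. -/
/-- `P m n = ∏_{i=1}^n (m+i)`. -/
def P (m n : ℕ) : ℕ := ∏ i ∈ Finset.Icc 1 n, (m + i)

/-!
Put `N = m + n` and `k = n`, so that `2 * k ≤ N` and `P m n = k ! * N.choose k`; the point is that
`N.choose k` is too large to be composed of primes `p ≤ k` only. Suppose it is so composed. Each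
prime power dividing a binomial coefficient `N.choose k` is at most `N`, whence
`(N / k) ^ k ≤ N.choose k ≤ N ^ π k`, and as `π k ≤ k / 3` for `k ≥ 37` this gives `N ^ 2 ≤ k ^ 3`.

Moreover (Erdős) the primes beyond `√N` divide `N.choose k` at most once, those beyond `∛N` at most
twice, and no prime beyond `M = min k (N / 3)` divides it, so that
`N.choose k ≤ N ^ π (∛N) * 4 ^ √N * 4 ^ M`. Comparing with
`(3 / 2) ^ k * 4 ^ M ≤ 2 * k * N.choose k` excludes `k ≥ 6 ^ 4`. For smaller `k` the bound
`N ^ 2 ≤ k ^ 3` leaves only `N < 6 ^ 6`, where explicit primes are dense enough to find one in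
`(N - k, N]`; for `k < 37` there remain finitely many pairs to check.
-/

section

open Finset
open scoped Nat Nat.Prime

variable {N k M : ℕ}

theorem P_eq_factorial_mul_choose (m n : ℕ) : P m n = n ! * (m + n).choose n := by
  rw [← Nat.ascFactorial_eq_factorial_mul_choose, Nat.ascFactorial_eq_prod_range, P,
    ← Ico_succ_right_eq_Icc, prod_Ico_eq_prod_range]
  simp only [Order.succ_eq_add_one, Nat.add_sub_cancel, add_assoc]

/-! ### Binomial coefficients with small prime factors -/

theorem dvd_choose_of_mod_lt {p : ℕ} (hp : p.Prime) (hk : k < p) (h : N % p < k) :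
    p ∣ N.choose k := by
  have := Fact.mk hp
  have lucas := Choose.choose_modEq_choose_mod_mul_choose_div_nat (n := N) (k := k) (p := p)
  rwa [Nat.mod_eq_of_lt hk, Nat.choose_eq_zero_of_lt h, zero_mul, Nat.modEq_zero_iff_dvd] at lucas

theorem choose_notMem_smoothNumbers_of_mod_lt {p : ℕ} (hp : p.Prime) (hk : k < p)
    (h : N % p < k) : N.choose k ∉ Nat.smoothNumbers (k + 1) := fun hsmooth =>
  hk.not_ge <| Nat.lt_succ_iff.1 <|
    Nat.mem_smoothNumbers'.1 hsmooth p hp (dvd_choose_of_mod_lt hp hk h)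

theorem pow_le_pow_mul_choose (hk : k ≤ N) : N ^ k ≤ k ^ k * N.choose k := by
  have h : N ^ k * k.descFactorial k ≤ k ^ k * N.descFactorial k := by
    simp only [Nat.descFactorial_eq_prod_range, pow_eq_prod_const, ← prod_mul_distrib]
    refine prod_le_prod' fun i _ => ?_
    rw [Nat.mul_sub, Nat.mul_sub, Nat.mul_comm N k]
    exact Nat.sub_le_sub_left (Nat.mul_le_mul_right i hk) _
  rw [Nat.descFactorial_self, Nat.descFactorial_eq_factorial_mul_choose, mul_left_comm,
    mul_comm (N ^ k)] at h
  exact Nat.le_of_mul_le_mul_left h k.factorial_pos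

theorem prod_primesLE_pow_factorization {n : ℕ} (h : n ∈ Nat.smoothNumbers (M + 1)) :
    ∏ p ∈ Nat.primesLE M, p ^ n.factorization p = n := by
  have hsupp : n.factorization.support ⊆ Nat.primesLE M :=
    Nat.primeFactors_subset_of_mem_smoothNumbers h
  rw [← Finsupp.prod_of_support_subset _ hsupp _ fun p _ => pow_zero p]
  exact Nat.prod_factorization_pow_eq_self (Nat.ne_zero_of_mem_smoothNumbers h)

theorem choose_le_pow_primeCounting (hN : 0 < N) (h : N.choose k ∈ Nat.smoothNumbers (M + 1)) :
    N.choose k ≤ N ^ π M := by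
  rw [← prod_primesLE_pow_factorization h, ← Nat.primesLE_card_eq_primeCounting]
  exact prod_le_pow_card _ _ _ fun p _ => Nat.pow_factorization_choose_le hN

theorem primeCounting_le_self (n : ℕ) : π n ≤ n := by
  simpa only [Nat.primesLE_card_eq_primeCounting, ← Nat.primesLE_eq_filter_Icc_one, Nat.card_Icc,
    Nat.add_sub_cancel] using card_filter_le (Icc 1 n) Nat.Prime

theorem pow_sub_primeCounting_le (hN : 0 < N) (hk : k ≤ N)
    (h : N.choose k ∈ Nat.smoothNumbers (k + 1)) : N ^ (k - π k) ≤ k ^ k := by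
  refine Nat.le_of_mul_le_mul_right ?_ (pow_pos hN (π k))
  calc N ^ (k - π k) * N ^ π k = N ^ k := by
        rw [← pow_add, Nat.sub_add_cancel (primeCounting_le_self k)]
    _ ≤ k ^ k * N.choose k := pow_le_pow_mul_choose hk
    _ ≤ k ^ k * N ^ π k := Nat.mul_le_mul_left _ (choose_le_pow_primeCounting hN h)

/-! ### Linear bounds for the prime-counting function -/

theorem three_mul_primeCounting_le {n : ℕ} (hn : 37 ≤ n) : 3 * π n ≤ n := by
  rcases lt_or_ge n 150 with h | h
  · have : ∀ n < 150, 37 ≤ n → 3 * π n ≤ n := by decide +kernel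
    exact this n h hn
  · -- Beyond 30, primes lie in the `φ 30 = 8` residue classes coprime to 30.
    have hπ := Nat.primeCounting_add_le (a := 30) (k := 30) (by lia) le_rfl (n - 30)
    have hπ30 : π 30 = 10 := by decide +kernel
    have hφ30 : Nat.totient 30 = 8 := by decide +kernel
    rw [hπ30, hφ30, Nat.add_sub_cancel' (by lia)] at hπ
    lia

theorem two_mul_primeCounting_le {n : ℕ} (hn : 8 ≤ n) : 2 * π n ≤ n := by
  rcases lt_or_ge n 37 with h | h
  · have : ∀ n < 37, 8 ≤ n → 2 * π n ≤ n := by decide +kernel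
    exact this n h hn
  · have := three_mul_primeCounting_le h
    lia

theorem sq_le_pow_three_of_choose_mem_smoothNumbers (hk : 37 ≤ k) (hkN : k ≤ N)
    (h : N.choose k ∈ Nat.smoothNumbers (k + 1)) : N ^ 2 ≤ k ^ 3 := by
  have hN : 0 < N := by lia
  refine (Nat.pow_le_pow_iff_left (show k ≠ 0 by lia)).1 ?_
  calc (N ^ 2) ^ k = N ^ (2 * k) := (pow_mul _ _ _).symm
    _ ≤ N ^ ((k - π k) * 3) :=
        Nat.pow_le_pow_right hN (by have := three_mul_primeCounting_le hk; lia)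
    _ = (N ^ (k - π k)) ^ 3 := pow_mul _ _ _
    _ ≤ (k ^ k) ^ 3 := Nat.pow_le_pow_left (pow_sub_primeCounting_le hN hkN h) 3
    _ = (k ^ 3) ^ k := pow_right_comm _ _ _

/-! ### Small `k` -/

theorem choose_notMem_smoothNumbers_of_lt_37 (hk : 1 ≤ k) (hk37 : k < 37) (hN : 2 * k ≤ N) :
    N.choose k ∉ Nat.smoothNumbers (k + 1) := by
  intro h
  have hpow : N ^ (k - π k) ≤ k ^ k := pow_sub_primeCounting_le (by lia) (by lia) h
  have hN256 : N < 256 := by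
    by_contra! hge
    have hlt : ∀ k ∈ Ico 1 37, k ^ k < 256 ^ (k - π k) := by decide +kernel
    exact (hlt k (mem_Ico.2 ⟨hk, hk37⟩)).not_ge ((Nat.pow_le_pow_left hge _).trans hpow)
  have hcheck : ∀ k ∈ Ico 1 37, ∀ N ∈ Ico (2 * k) 256,
      k ^ k < N ^ (k - π k) ∨ ∃ p ∈ Nat.primesLE 43, k < p ∧ N % p < k := by decide +kernel
  obtain ⟨p, hp, hkp, hmod⟩ :=
    (hcheck k (mem_Ico.2 ⟨hk, hk37⟩) N (mem_Ico.2 ⟨hN, hN256⟩)).resolve_left hpow.not_gt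
  exact choose_notMem_smoothNumbers_of_mod_lt (Nat.prime_of_mem_primesLE hp) hkp hmod h

/-! ### Medium `k`: primes in short intervals -/

theorem exists_rel_of_isChain {α : Type*} [LinearOrder α] {R : α → α → Prop} {l : List α}
    {a b x : α} (hl : (a :: l).IsChain R) (ha : a ≤ x) (hb : b ∈ l) (hx : x < b) :
    ∃ q, ∃ r ∈ l, R q r ∧ q ≤ x ∧ x < r := by
  induction l generalizing a with
  | nil => exact absurd hb List.not_mem_nil
  | cons c l ih =>
    obtain ⟨hac, hcl⟩ := List.isChain_cons_cons.1 hl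
    rcases lt_or_ge x c with hxc | hcx
    · exact ⟨a, c, List.mem_cons_self, hac, ha, hxc⟩
    · have hbl : b ∈ l := (List.mem_cons.1 hb).resolve_left fun h => (h ▸ hx).not_ge hcx
      obtain ⟨q, r, hr, h⟩ := ih hcl hcx hbl
      exact ⟨q, r, List.mem_cons_of_mem c hr, h⟩

/-- Primes from 73 to beyond `6 ^ 6` with short gaps, found greedily: each entry `r` is the largest
prime with `(r - q) ^ 3 ≤ max (37 ^ 3) (q ^ 2)`, where `q` is the entry before it (at the start,
`q = 37`). -/
def shortGapPrimes : List ℕ :=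
  [73, 109, 139, 173, 199, 233, 269, 307, 349, 397, 449, 503, 563, 631, 701, 773, 857, 947, 1039,
    1129, 1237, 1327, 1447, 1571, 1699, 1831, 1979, 2131, 2293, 2459, 2633, 2819, 3011, 3217, 3433,
    3659, 3889, 4133, 4373, 4639, 4909, 5197, 5483, 5791, 6113, 6427, 6763, 7109, 7477, 7853, 8243,
    8647, 9067, 9497, 9941, 10399, 10867, 11353, 11839, 12347, 12853, 13399, 13963, 14537, 15131,
    15739, 16363, 16993, 17627, 18301, 18979, 19687, 20411, 21157, 21911, 22691, 23473, 24281,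
    25117, 25969, 26839, 27733, 28649, 29581, 30529, 31489, 32479, 33493, 34519, 35573, 36653,
    37747, 38867, 40013, 41179, 42359, 43573, 44809, 46061, 47339]

theorem prime_of_mem_shortGapPrimes : ∀ p ∈ shortGapPrimes, p.Prime := by
  simp only [shortGapPrimes, List.forall_mem_cons]
  norm_num

theorem isChain_shortGapPrimes :
    (37 :: shortGapPrimes).IsChain fun q r => (r - q) ^ 3 ≤ max (37 ^ 3) (q ^ 2) := by
  decide +kernel

theorem exists_prime_sub_pow_three_le {m : ℕ} (hm : 37 ≤ m) (hm' : m < 6 ^ 6) :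
    ∃ p, p.Prime ∧ m < p ∧ (p - m) ^ 3 ≤ max (37 ^ 3) (m ^ 2) := by
  have hlast : 47339 ∈ shortGapPrimes := by decide
  obtain ⟨q, p, hp, hqp, hqm, hmp⟩ :=
    exists_rel_of_isChain isChain_shortGapPrimes hm hlast (by lia)
  refine ⟨p, prime_of_mem_shortGapPrimes p hp, hmp, ?_⟩
  calc (p - m) ^ 3 ≤ (p - q) ^ 3 := by gcongr
    _ ≤ max (37 ^ 3) (q ^ 2) := hqp
    _ ≤ max (37 ^ 3) (m ^ 2) := by gcongr

theorem choose_notMem_smoothNumbers_of_lt_six_pow_four (hk : 37 ≤ k) (hk' : k < 6 ^ 4)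
    (hN : 2 * k ≤ N) : N.choose k ∉ Nat.smoothNumbers (k + 1) := by
  intro h
  have hsq : N ^ 2 ≤ k ^ 3 := sq_le_pow_three_of_choose_mem_smoothNumbers hk (by lia) h
  have hN6 : N < 6 ^ 6 := lt_of_pow_lt_pow_left₀ 2 (by lia) <|
    calc N ^ 2 ≤ k ^ 3 := hsq
      _ < (6 ^ 4) ^ 3 := by gcongr
      _ = (6 ^ 6) ^ 2 := by norm_num
  obtain ⟨p, hp, hlt, hgap⟩ := exists_prime_sub_pow_three_le (m := N - k) (by lia) (by lia)
  have hgap' : p - (N - k) ≤ k := (Nat.pow_le_pow_iff_left three_ne_zero).1 <|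
    calc (p - (N - k)) ^ 3 ≤ max (37 ^ 3) ((N - k) ^ 2) := hgap
      _ ≤ k ^ 3 := max_le (by gcongr) ((Nat.pow_le_pow_left (N.sub_le k) 2).trans hsq)
  have hmod : N % p = N - p := by
    rw [Nat.mod_eq_sub_mod (by lia), Nat.mod_eq_of_lt (by lia)]
  exact choose_notMem_smoothNumbers_of_mod_lt hp (by lia) (by lia) h

/-! ### Large `k`: upper and lower bounds for the binomial coefficient -/

theorem prod_primesLE_ite_le {f : ℕ → ℕ} (hf : ∀ p, p.Prime → 1 ≤ f p) (r M : ℕ) :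
    ∏ p ∈ Nat.primesLE M, (if p ≤ r then f p else 1) ≤ ∏ p ∈ Nat.primesLE r, f p := by
  rw [← prod_filter]
  refine prod_le_prod_of_subset_of_one_le' (fun p hp => ?_) fun p hp _ =>
    hf p (Nat.prime_of_mem_primesLE hp)
  rw [mem_filter] at hp
  exact Nat.mem_primesLE.2 ⟨hp.2, Nat.prime_of_mem_primesLE hp.1⟩

theorem pow_factorization_choose_le_ite {p : ℕ} (hp : p.Prime) (hN : 0 < N) (k : ℕ) :
    p ^ (N.choose k).factorization p ≤
      (if p ≤ Nat.nthRoot 3 N then N else 1) * (if p ≤ N.sqrt then p else 1) * p := by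
  rcases le_or_gt p (Nat.nthRoot 3 N) with hr | hr
  · rw [if_pos hr, mul_assoc]
    refine (Nat.pow_factorization_choose_le hN).trans (Nat.le_mul_of_pos_right N ?_)
    split_ifs <;> simp only [one_mul, mul_pos, hp.pos]
  rw [if_neg hr.not_ge, one_mul]
  rcases le_or_gt p N.sqrt with hs | hs
  · have hlt : p ^ (N.choose k).factorization p < p ^ 3 :=
      (Nat.pow_factorization_choose_le hN).trans_lt ((Nat.nthRoot_lt_iff three_ne_zero).1 hr)
    rw [if_pos hs, ← sq]
    exact Nat.pow_le_pow_right hp.pos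
      (Nat.lt_succ_iff.1 ((Nat.pow_lt_pow_iff_right hp.one_lt).1 hlt))
  · rw [if_neg hs.not_ge, one_mul]
    simpa only [pow_one] using
      Nat.pow_le_pow_right hp.pos (Nat.factorization_choose_le_one (Nat.sqrt_lt'.1 hs))

theorem choose_le_of_mem_smoothNumbers (hN : 0 < N)
    (h : N.choose k ∈ Nat.smoothNumbers (M + 1)) :
    N.choose k ≤ N ^ π (Nat.nthRoot 3 N) * 4 ^ N.sqrt * 4 ^ M := by
  calc N.choose k = ∏ p ∈ Nat.primesLE M, p ^ (N.choose k).factorization p :=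
        (prod_primesLE_pow_factorization h).symm
    _ ≤ ∏ p ∈ Nat.primesLE M,
          (if p ≤ Nat.nthRoot 3 N then N else 1) * (if p ≤ N.sqrt then p else 1) * p :=
        prod_le_prod' fun p hp =>
          pow_factorization_choose_le_ite (Nat.prime_of_mem_primesLE hp) hN k
    _ ≤ N ^ π (Nat.nthRoot 3 N) * primorial N.sqrt * primorial M := by
        rw [prod_mul_distrib, prod_mul_distrib, ← primorial_eq_prod_primesLE,
          ← Nat.primesLE_card_eq_primeCounting, ← prod_const, primorial_eq_prod_primesLE N.sqrt]
        gcongr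
        · exact prod_primesLE_ite_le (fun _ _ => hN) _ M
        · exact prod_primesLE_ite_le (fun p hp => hp.pos) _ M
    _ ≤ N ^ π (Nat.nthRoot 3 N) * 4 ^ N.sqrt * 4 ^ M := by
        gcongr <;> exact primorial_le_four_pow _

theorem choose_mem_smoothNumbers_div_three (hN : 6 ≤ N) (hk : 2 * k ≤ N)
    (h : N.choose k ∈ Nat.smoothNumbers (k + 1)) :
    N.choose k ∈ Nat.smoothNumbers (N / 3 + 1) := by
  rw [Nat.mem_smoothNumbers'] at h ⊢
  intro p hp hdvd
  by_contra! hlt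
  have hpk := h p hp hdvd
  have hzero : (N.choose k).factorization p = 0 :=
    Nat.factorization_choose_of_lt_three_mul (by lia) (by lia) (by lia) (by lia)
  exact (hp.factorization_pos_of_dvd (Nat.choose_pos (by lia)).ne' hdvd).ne' hzero

theorem pow_mul_choose_le_choose_add {x : ℝ} {n d : ℕ} (hx : 1 ≤ x) (hk : k ≤ n)
    (h : x * (n + d - k) ≤ n + d) : x ^ d * n.choose k ≤ (n + d).choose k := by
  induction d with
  | zero => simp only [pow_zero, one_mul, add_zero, le_refl]
  | succ d ih =>
    have hsucc : ((n + d).choose k : ℝ) * (n + d + 1) =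
        (n + d + 1).choose k * (n + d + 1 - k) := by
      have := Nat.choose_mul_succ_eq (n + d) k
      rw [← @Nat.cast_inj ℝ, Nat.cast_mul, Nat.cast_mul, Nat.cast_sub (by lia)] at this
      exact_mod_cast this
    have hpos : (0 : ℝ) < n + d + 1 - k := by
      rw [sub_pos]
      exact_mod_cast Nat.lt_succ_of_le (hk.trans (Nat.le_add_right n d))
    push_cast at h
    refine le_of_mul_le_mul_right ?_ hpos
    calc x ^ (d + 1) * n.choose k * (n + d + 1 - k)
        = x ^ d * n.choose k * (x * (n + (d + 1) - k)) := by ring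
      _ ≤ (n + d).choose k * (n + (d + 1)) :=
          mul_le_mul (ih (by linarith)) h (mul_nonneg (by linarith) (by linarith))
            (Nat.cast_nonneg _)
      _ = (n + (d + 1)).choose k * (n + d + 1 - k) := by rw [← add_assoc, hsucc]; rfl

theorem four_pow_mul_pow_le_choose {d : ℕ} (hk : 0 < k) (hd : d ≤ k) :
    (4 : ℝ) ^ k * (3 / 2) ^ d ≤ 2 * k * (2 * k + d).choose k := by
  have hgrowth : (3 / 2 : ℝ) ^ d * (2 * k).choose k ≤ (2 * k + d).choose k := by
    refine pow_mul_choose_le_choose_add (by norm_num) (by lia) ?_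
    have : (d : ℝ) ≤ k := by exact_mod_cast hd
    push_cast
    linarith
  have hcentral : (4 : ℝ) ^ k ≤ 2 * k * (2 * k).choose k := by
    exact_mod_cast Nat.four_pow_le_two_mul_self_mul_centralBinom k hk
  calc (4 : ℝ) ^ k * (3 / 2) ^ d ≤ 2 * k * (2 * k).choose k * (3 / 2) ^ d := by gcongr
    _ = 2 * k * ((3 / 2) ^ d * (2 * k).choose k) := by ring
    _ ≤ 2 * k * (2 * k + d).choose k := by gcongr

theorem pow_mul_four_pow_le_choose (hk : 0 < k) (hN : 2 * k ≤ N) (hMk : M ≤ k)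
    (hMN : 3 * M ≤ N) : (3 / 2 : ℝ) ^ k * 4 ^ M ≤ 2 * k * N.choose k := by
  obtain ⟨d, hd, hdN, hMd⟩ : ∃ d ≤ k, 2 * k + d ≤ N ∧ 3 * M ≤ 2 * k + d :=
    ⟨min k (N - 2 * k), by lia⟩
  -- This is `27 / 8 ≤ 4` together with `k - d ≤ 3 * (k - M)`.
  have hpow : (3 / 2 : ℝ) ^ (k - d) ≤ 4 ^ (k - M) :=
    calc (3 / 2 : ℝ) ^ (k - d) ≤ (3 / 2) ^ (3 * (k - M)) :=
          pow_le_pow_right₀ (by norm_num) (by lia)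
      _ = ((3 / 2) ^ 3) ^ (k - M) := pow_mul _ _ _
      _ ≤ 4 ^ (k - M) := pow_le_pow_left₀ (by norm_num) (by norm_num) _
  calc (3 / 2 : ℝ) ^ k * 4 ^ M = (3 / 2) ^ (k - d) * (3 / 2) ^ d * 4 ^ M := by
        rw [← pow_add, Nat.sub_add_cancel hd]
    _ ≤ 4 ^ (k - M) * (3 / 2) ^ d * 4 ^ M := by gcongr
    _ = 4 ^ k * (3 / 2) ^ d := by rw [mul_right_comm, ← pow_add, Nat.sub_add_cancel hMk]
    _ ≤ 2 * k * (2 * k + d).choose k := four_pow_mul_pow_le_choose hk hd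
    _ ≤ 2 * k * N.choose k := by gcongr

theorem three_halves_pow_le_of_choose_mem_smoothNumbers (hk : 3 ≤ k) (hN : 2 * k ≤ N)
    (h : N.choose k ∈ Nat.smoothNumbers (k + 1)) :
    (3 / 2 : ℝ) ^ k ≤ 2 * k * (N ^ π (Nat.nthRoot 3 N) * 4 ^ N.sqrt) := by
  obtain ⟨M, hMk, hMN, hM⟩ :
      ∃ M ≤ k, 3 * M ≤ N ∧ N.choose k ∈ Nat.smoothNumbers (M + 1) := by
    refine ⟨min k (N / 3), min_le_left _ _, by lia, ?_⟩
    rcases min_choice k (N / 3) with hmin | hmin <;> rw [hmin]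
    exacts [h, choose_mem_smoothNumbers_div_three (by lia) hN h]
  refine le_of_mul_le_mul_right ?_ (show (0 : ℝ) < 4 ^ M by positivity)
  calc (3 / 2 : ℝ) ^ k * 4 ^ M ≤ 2 * k * N.choose k :=
        pow_mul_four_pow_le_choose (by lia) hN hMk hMN
    _ ≤ 2 * k * (N ^ π (Nat.nthRoot 3 N) * 4 ^ N.sqrt * 4 ^ M) := by
        gcongr
        exact_mod_cast choose_le_of_mem_smoothNumbers (by lia) hM
    _ = 2 * k * (N ^ π (Nat.nthRoot 3 N) * 4 ^ N.sqrt) * 4 ^ M := by ring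

theorem log_le_log_add_div_sub_one {a u : ℝ} (ha : 0 < a) (hu : 0 < u) :
    Real.log u ≤ Real.log a + u / a - 1 := by
  have h := Real.log_le_sub_one_of_pos (div_pos hu ha)
  rw [Real.log_div hu.ne' ha.ne'] at h
  linarith

theorem seven_mul_log_two_le : 7 * Real.log 2 ≤ 12 * Real.log (3 / 2) := by
  have h := Real.log_le_log (by norm_num) (show (2 : ℝ) ^ 7 ≤ (3 / 2) ^ 12 by norm_num)
  simpa only [Real.log_pow, Nat.cast_ofNat] using h

/-- With `u ^ 4 = k`, the left-hand side bounds the logarithm of the right-hand side of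
`three_halves_pow_le_of_choose_mem_smoothNumbers`, since `N ≤ u ^ 6`. -/
theorem log_bound_lt_pow_four_mul_log {u : ℝ} (hu : 6 ≤ u) :
    u ^ 2 / 2 * Real.log (u ^ 6) + u ^ 3 * Real.log 4 + Real.log (2 * u ^ 4) <
      u ^ 4 * Real.log (3 / 2) := by
  have hlog4 : Real.log 4 = 2 * Real.log 2 := by
    rw [show (4 : ℝ) = 2 ^ 2 by norm_num, Real.log_pow, Nat.cast_ofNat]
  have hlog2 := Real.log_two_lt_d9
  have hlogu : Real.log u ≤ 3 * 0.6932 + u / 8 - 1 := by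
    have h := log_le_log_add_div_sub_one (a := 2 ^ 3) (by norm_num) (show 0 < u by linarith)
    rw [Real.log_pow] at h
    push_cast at h
    linarith
  rw [Real.log_mul two_ne_zero (by positivity), Real.log_pow, Real.log_pow, hlog4]
  push_cast
  calc u ^ 2 / 2 * (6 * Real.log u) + u ^ 3 * (2 * Real.log 2) + (Real.log 2 + 4 * Real.log u)
      = (3 * u ^ 2 + 4) * Real.log u + (2 * u ^ 3 + 1) * Real.log 2 := by ring
    _ ≤ (3 * u ^ 2 + 4) * (3 * 0.6932 + u / 8 - 1) + (2 * u ^ 3 + 1) * 0.6932 := by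
        gcongr
        linarith
    _ < u ^ 4 * (7 / 12 * 0.693) := by
        -- In powers of `t = u - 6` the difference has positive coefficients.
        obtain ⟨t, ht, rfl⟩ : ∃ t, 0 ≤ t ∧ u = 6 + t := ⟨u - 6, by linarith, by ring⟩
        linarith [pow_nonneg ht 2, pow_nonneg ht 3, pow_nonneg ht 4]
    _ ≤ u ^ 4 * Real.log (3 / 2) := by
        gcongr
        linarith [Real.log_two_gt_d9, seven_mul_log_two_le]

theorem two_mul_mul_pow_mul_four_pow_lt {u : ℝ} (hu : 6 ≤ u) (huk : u ^ 4 = k)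
    (hN : 512 ≤ N) (hNu : (N : ℝ) ≤ u ^ 6) :
    2 * k * (N ^ π (Nat.nthRoot 3 N) * 4 ^ N.sqrt) < (3 / 2 : ℝ) ^ k := by
  have hsqrt : (N.sqrt : ℝ) ≤ u ^ 3 := by
    refine le_of_sq_le_sq ?_ (by positivity)
    rw [← pow_mul]
    exact le_trans (mod_cast Nat.sqrt_le' N) hNu
  have hroot : (Nat.nthRoot 3 N : ℝ) ≤ u ^ 2 := by
    refine le_of_pow_le_pow_left₀ three_ne_zero (by positivity) ?_
    rw [← pow_mul]
    exact le_trans (mod_cast Nat.pow_nthRoot_le (.inl three_ne_zero)) hNu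
  have hπ : (π (Nat.nthRoot 3 N) : ℝ) ≤ u ^ 2 / 2 := by
    have h8 : 8 ≤ Nat.nthRoot 3 N := (Nat.le_nthRoot_iff three_ne_zero).2 hN
    have : (2 * π (Nat.nthRoot 3 N) : ℝ) ≤ Nat.nthRoot 3 N := by
      exact_mod_cast two_mul_primeCounting_le h8
    linarith
  have hN1 : (1 : ℝ) ≤ N := by exact_mod_cast (by lia : 1 ≤ N)
  have hk : (0 : ℝ) < k := huk ▸ by positivity
  rw [← Real.log_lt_log_iff (by positivity) (by positivity)]
  calc Real.log (2 * k * (N ^ π (Nat.nthRoot 3 N) * 4 ^ N.sqrt))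
      = π (Nat.nthRoot 3 N) * Real.log N + N.sqrt * Real.log 4 + Real.log (2 * u ^ 4) := by
        rw [huk, Real.log_mul (x := 2 * k) (by positivity) (by positivity),
          Real.log_mul (x := N ^ _) (by positivity) (by positivity), Real.log_pow, Real.log_pow,
          add_comm]
    _ ≤ u ^ 2 / 2 * Real.log (u ^ 6) + u ^ 3 * Real.log 4 + Real.log (2 * u ^ 4) := by
        have := Real.log_nonneg hN1
        gcongr
    _ < u ^ 4 * Real.log (3 / 2) := log_bound_lt_pow_four_mul_log hu
    _ = Real.log ((3 / 2) ^ k) := by rw [huk, Real.log_pow]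

theorem choose_notMem_smoothNumbers_of_six_pow_four_le (hk : 6 ^ 4 ≤ k) (hN : 2 * k ≤ N) :
    N.choose k ∉ Nat.smoothNumbers (k + 1) := by
  intro h
  have hsq : N ^ 2 ≤ k ^ 3 := sq_le_pow_three_of_choose_mem_smoothNumbers (by lia) (by lia) h
  obtain ⟨u, hu, huk⟩ : ∃ u : ℝ, 6 ≤ u ∧ u ^ 4 = k := by
    refine ⟨√√k, Real.le_sqrt_of_sq_le (Real.le_sqrt_of_sq_le ?_), ?_⟩
    · rw [← pow_mul]
      exact_mod_cast hk
    · rw [pow_mul _ 2 2, Real.sq_sqrt (Real.sqrt_nonneg _), Real.sq_sqrt k.cast_nonneg]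
  have hNu : (N : ℝ) ≤ u ^ 6 := by
    refine le_of_sq_le_sq ?_ (by positivity)
    rw [← pow_mul, pow_mul u 4 3, huk]
    exact_mod_cast hsq
  exact (two_mul_mul_pow_mul_four_pow_lt hu huk (by lia) hNu).not_ge
    (three_halves_pow_le_of_choose_mem_smoothNumbers (by lia) hN h)

theorem choose_notMem_smoothNumbers (hk : 1 ≤ k) (hN : 2 * k ≤ N) :
    N.choose k ∉ Nat.smoothNumbers (k + 1) := by
  rcases lt_or_ge k 37 with hk37 | hk37
  · exact choose_notMem_smoothNumbers_of_lt_37 hk hk37 hN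
  rcases lt_or_ge k (6 ^ 4) with hk6 | hk6
  · exact choose_notMem_smoothNumbers_of_lt_six_pow_four hk37 hk6 hN
  · exact choose_notMem_smoothNumbers_of_six_pow_four_le hk6 hN

end

/-- Sylvester's theorem: for `m ≥ n ≥ 1`, the product of the `n` consecutive
integers `m+1, …, m+n` is divisible by a prime strictly greater than `n`. -/
theorem stmt_11 (m n : ℕ) (hmn : m ≥ n) (hn : n ≥ 1) :
    ∃ p : ℕ, p.Prime ∧ n < p ∧ p ∣ P m n := by
  have hrough : (m + n).choose n ∉ Nat.smoothNumbers (n + 1) :=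
    choose_notMem_smoothNumbers hn (by lia)
  rw [Nat.mem_smoothNumbers'] at hrough
  push Not at hrough
  obtain ⟨p, hp, hdvd, hnp⟩ := hrough
  refine ⟨p, hp, hnp, ?_⟩
  rw [P_eq_factorial_mul_choose]
  exact hdvd.mul_left n.factorial
end

section
/- Let π(n) denote the number of primes ≤ n. For every integer n ≥ 620634, the number of primes p with n < p < 2n is at least ⌊0.05 · π(n)⌋. -/
/-! The central binomial coefficient `C(2n, n)` is at least `4 ^ n / n`. Its prime factors at most
`2n / 3` contribute at most `(2n) ^ √(2n) * 4 ^ (2n / 3)`, there are none in `(2n / 3, n]`, and each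
prime in `(n, 2n)` contributes at most `2n`. Hence `(n, 2n)` contains at least about
`n log 4 / (3 log (2n))` primes, while Chebyshev's bound for `π n` is about `2 n log 4 / log n`; for
`n ≥ 2048` the slack between the constants `1 / 3` and `2 / 20` absorbs the lower order terms.

Below `2048` the monotonicity of `π` reduces the claim to finitely many intervals of `n`. -/

section

open Finset
open scoped Nat Nat.Prime

variable {n : ℕ}

theorem prime_iff_coprime_factorial_sqrt {p : ℕ} :
    p.Prime ↔ 2 ≤ p ∧ p.Coprime (Nat.sqrt p)! := by
  refine ⟨fun hp => ⟨hp.two_le, hp.coprime_factorial_of_lt (Nat.sqrt_lt_self hp.one_lt)⟩, ?_⟩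
  rintro ⟨two_le, hcop⟩
  rw [Nat.coprime_factorial_iff (by lia), Nat.sqrt_lt'] at hcop
  by_contra hp
  exact (Nat.minFac_sq_le_self (by lia) hp).not_gt hcop

theorem primeCounting_le_twenty_mul_card_primes_Ioo_of_lt (hn : n < 2048) :
    π n ≤ 20 * #{p ∈ Ioo n (2 * n) | p.Prime} := by
  -- Each interval but the last extends to the largest `b` passing the test in `endpoints`.
  let intervals : List (ℕ × ℕ) :=
    [(0, 1), (2, 2), (3, 4), (5, 6), (7, 12), (13, 22), (23, 42), (43, 78), (79, 150), (151, 280),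
      (281, 520), (521, 990), (991, 1866), (1867, 2047)]
  have cover : ∃ I ∈ intervals, I.1 ≤ n ∧ n ≤ I.2 := by
    simp only [intervals, List.exists_mem_cons_iff, List.not_mem_nil, false_and, exists_false]
    lia
  have endpoints : ∀ I ∈ intervals, π I.2 ≤ 20 * #{p ∈ Ioo I.2 (2 * I.1) | p.Prime} := by
    -- Testing primality by a gcd with a factorial keeps the evaluation fast.
    simp only [Nat.primeCounting, Nat.primeCounting', Nat.count_eq_card_filter_range,
      prime_iff_coprime_factorial_sqrt]
    decide +kernel
  obtain ⟨⟨a, b⟩, hI, han, hnb⟩ := cover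
  calc π n ≤ π b := Nat.monotone_primeCounting hnb
    _ ≤ 20 * #{p ∈ Ioo b (2 * a) | p.Prime} := endpoints _ hI
    _ ≤ 20 * #{p ∈ Ioo n (2 * n) | p.Prime} := by gcongr

theorem prod_primesLE_pow_factorization_choose_le {N : ℕ} (hN : 0 < N) (k m : ℕ) :
    ∏ p ∈ m.primesLE, p ^ (N.choose k).factorization p ≤ N ^ Nat.sqrt N * primorial m := by
  rw [← prod_filter_mul_prod_filter_not m.primesLE (· ≤ Nat.sqrt N), primorial_eq_prod_primesLE]
  gcongr ?_ * ?_
  · have card_le : #{p ∈ m.primesLE | p ≤ Nat.sqrt N} ≤ Nat.sqrt N := by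
      suffices {p ∈ m.primesLE | p ≤ Nat.sqrt N} ⊆ Icc 1 (Nat.sqrt N) by
        simpa using card_le_card this
      intro p hp
      obtain ⟨hpm, hpN⟩ := mem_filter.1 hp
      exact mem_Icc.2 ⟨(Nat.one_lt_of_mem_primesLE hpm).le, hpN⟩
    exact (prod_le_pow_card _ _ _ fun p _ => Nat.pow_factorization_choose_le hN).trans
      (Nat.pow_le_pow_right hN card_le)
  · calc ∏ p ∈ m.primesLE with ¬p ≤ Nat.sqrt N, p ^ (N.choose k).factorization p
        ≤ ∏ p ∈ m.primesLE with ¬p ≤ Nat.sqrt N, p ^ 1 := by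
          refine prod_le_prod' fun p hp => ?_
          obtain ⟨hpm, hpN⟩ := mem_filter.1 hp
          exact Nat.pow_le_pow_right (Nat.prime_of_mem_primesLE hpm).pos
            (Nat.factorization_choose_le_one (Nat.sqrt_lt'.1 (not_le.1 hpN)))
      _ ≤ ∏ p ∈ m.primesLE, p := by
          simp only [pow_one]
          exact prod_le_prod_of_subset_of_one_le' (filter_subset _ _)
            fun p hp _ => (Nat.one_lt_of_mem_primesLE hp).le

theorem centralBinom_eq_prod_primesLE_mul_prod_primes_Ioo (hn : 2 < n) :
    n.centralBinom = (∏ p ∈ (2 * n / 3).primesLE, p ^ n.centralBinom.factorization p) *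
      ∏ p ∈ Ioo n (2 * n) with p.Prime, p ^ n.centralBinom.factorization p := by
  have disj : Disjoint (2 * n / 3).primesLE {p ∈ Ioo n (2 * n) | p.Prime} := by
    simp only [disjoint_left, Nat.mem_primesLE, mem_filter, mem_Ioo]
    lia
  rw [← prod_union disj]
  conv_lhs => rw [← n.prod_pow_factorization_centralBinom]
  refine (prod_subset (fun p hp => ?_) fun p hp hp' => ?_).symm
  · simp only [mem_union, Nat.mem_primesLE, mem_filter, mem_Ioo, mem_range] at hp ⊢
    lia
  · suffices n.centralBinom.factorization p = 0 by rw [this, pow_zero]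
    by_cases prime_p : p.Prime
    · have : p ≠ 2 * n := by
        rintro rfl
        exact Nat.not_prime_mul (by norm_num) (by lia) prime_p
      simp only [mem_union, Nat.mem_primesLE, mem_filter, mem_Ioo, mem_range, prime_p,
        and_true] at hp hp'
      exact Nat.factorization_centralBinom_of_two_mul_self_lt_three_mul hn (by lia) (by lia)
    · exact Nat.factorization_eq_zero_of_not_prime _ prime_p

theorem centralBinom_le_pow_card_primes_Ioo (hn : 2 < n) :
    n.centralBinom ≤ (2 * n) ^ Nat.sqrt (2 * n) * 4 ^ (2 * n / 3) *
      (2 * n) ^ #{p ∈ Ioo n (2 * n) | p.Prime} := by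
  have two_mul_pos : 0 < 2 * n := by lia
  rw [centralBinom_eq_prod_primesLE_mul_prod_primes_Ioo hn]
  gcongr ?_ * ?_
  · grw [Nat.centralBinom, prod_primesLE_pow_factorization_choose_le two_mul_pos,
      primorial_le_four_pow]
  · exact prod_le_pow_card _ _ _ fun p _ => Nat.pow_factorization_choose_le two_mul_pos

theorem log_four_mul_div_three_le_mul_log_two_mul (hn : 4 ≤ n) :
    Real.log 4 * n / 3 ≤
      (#{p ∈ Ioo n (2 * n) | p.Prime} + √(2 * n) + 1) * Real.log (2 * n) := by
  set k := #{p ∈ Ioo n (2 * n) | p.Prime}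
  have four_pow_le : (4 : ℝ) ^ n ≤
      n * ((2 * n) ^ Nat.sqrt (2 * n) * 4 ^ (2 * n / 3) * (2 * n) ^ k) := by
    exact_mod_cast (Nat.four_pow_lt_mul_centralBinom n hn).le.trans
      (Nat.mul_le_mul_left n (centralBinom_le_pow_card_primes_Ioo (by lia)))
  have four_le : (4 : ℝ) ≤ n := by exact_mod_cast hn
  have log_le := Real.log_le_log (by positivity) four_pow_le
  rw [Real.log_mul (by positivity) (by positivity), Real.log_mul (by positivity) (by positivity),
    Real.log_mul (by positivity) (by positivity), Real.log_pow, Real.log_pow, Real.log_pow,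
    Real.log_pow] at log_le
  have log_nonneg : 0 ≤ Real.log (2 * n) := Real.log_nonneg (by linarith)
  have log_le_log_two_mul : Real.log n ≤ Real.log (2 * n) :=
    Real.log_le_log (by linarith) (by linarith)
  have sqrt_le : (Nat.sqrt (2 * n) : ℝ) * Real.log (2 * n) ≤ √(2 * n) * Real.log (2 * n) := by
    gcongr
    exact_mod_cast Real.nat_sqrt_le_real_sqrt (a := 2 * n)
  have div_le : ((2 * n / 3 : ℕ) : ℝ) * Real.log 4 ≤ 2 * n / 3 * Real.log 4 := by
    gcongr
    exact_mod_cast Nat.cast_div_le (α := ℝ) (m := 2 * n) (n := 3)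
  linarith

theorem log_le_mul_sqrt {x : ℝ} (hx : 4096 ≤ x) :
    Real.log x ≤ 3 / 16 * Real.log 2 * √x := by
  have sqrt_eq : √(4096 : ℝ) = 64 := by
    rw [show (4096 : ℝ) = 64 ^ 2 by norm_num, Real.sqrt_sq (by norm_num)]
  have log_eq : Real.log 4096 = 12 * Real.log 2 := by
    rw [show (4096 : ℝ) = 2 ^ 12 by norm_num, Real.log_pow]
    norm_num
  have exp_two_le : Real.exp 2 ≤ 4096 := by
    rw [← Real.le_log_iff_exp_le (by norm_num), log_eq]
    linarith [Real.log_two_gt_d9]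
  have div_sqrt_le : Real.log x / √x ≤ Real.log 4096 / √4096 :=
    Real.log_div_sqrt_antitoneOn exp_two_le (exp_two_le.trans hx) hx
  rw [div_le_iff₀ (Real.sqrt_pos.2 (by linarith)), log_eq, sqrt_eq] at div_sqrt_le
  linarith

theorem log_two_mul_le_mul_log {x : ℝ} (hx : 2048 ≤ x) :
    Real.log (2 * x) ≤ 12 / 11 * Real.log x := by
  have log_le := Real.log_le_log (by norm_num) hx
  rw [show (2048 : ℝ) = 2 ^ 11 by norm_num, Real.log_pow] at log_le
  rw [Real.log_mul (by norm_num) (by linarith)]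
  push_cast at log_le
  linarith

theorem primeCounting_le_mul_div_log_two_mul_add_sqrt (hn : 2048 ≤ n) :
    (π n : ℝ) ≤ 24 / 11 * (Real.log 4 * n / Real.log (2 * n)) + √n := by
  have hn' : (2048 : ℝ) ≤ n := by exact_mod_cast hn
  have log_pos : 0 < Real.log (2 * n) := Real.log_pos (by linarith)
  have log_le := log_two_mul_le_mul_log hn'
  have chebyshev := Chebyshev.pi_le_log4_mul_div (x := (n : ℝ)) (by linarith)
  rw [Nat.floor_natCast, Real.log_sqrt n.cast_nonneg] at chebyshev
  calc (π n : ℝ) ≤ Real.log 4 * n / (Real.log n / 2) + √n := chebyshev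
    _ ≤ Real.log 4 * n / (11 / 24 * Real.log (2 * n)) + √n := by gcongr; linarith
    _ = 24 / 11 * (Real.log 4 * n / Real.log (2 * n)) + √n := by field_simp

theorem mul_primeCounting_le_card_primes_Ioo_of_le (hn : 2048 ≤ n) :
    0.05 * (π n : ℝ) ≤ #{p ∈ Ioo n (2 * n) | p.Prime} := by
  have hn' : (2048 : ℝ) ≤ n := by exact_mod_cast hn
  have log_pos : 0 < Real.log (2 * n) := Real.log_pos (by linarith)
  have log_four : Real.log 4 = 2 * Real.log 2 := by
    rw [show (4 : ℝ) = 2 ^ 2 by norm_num, Real.log_pow, Nat.cast_ofNat]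
  have sqrt_ge : 64 ≤ √(2 * n : ℝ) := Real.le_sqrt_of_sq_le (by linarith)
  have sqrt_le : √(n : ℝ) ≤ √(2 * n) := Real.sqrt_le_sqrt (by linarith)
  set q := Real.log 4 * n / Real.log (2 * n) with hq
  have upper : (π n : ℝ) ≤ 24 / 11 * q + √n := primeCounting_le_mul_div_log_two_mul_add_sqrt hn
  have lower : q / 3 ≤ #{p ∈ Ioo n (2 * n) | p.Prime} + √(2 * n) + 1 := by
    rw [hq, div_right_comm, div_le_iff₀ log_pos]
    exact log_four_mul_div_three_le_mul_log_two_mul (by lia)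
  have sqrt_le_q : 16 / 3 * √(2 * n) ≤ q := by
    rw [hq, le_div_iff₀ log_pos]
    calc 16 / 3 * √(2 * n) * Real.log (2 * n)
        ≤ 16 / 3 * √(2 * n) * (3 / 16 * Real.log 2 * √(2 * n)) := by
          gcongr
          exact log_le_mul_sqrt (by linarith)
      _ = Real.log 2 * √(2 * n) ^ 2 := by ring
      _ = Real.log 4 * n := by rw [Real.sq_sqrt (by positivity), log_four]; ring
  linarith

end

theorem stmt_16_general (n : ℕ) :
    (0.05 : ℝ) * Nat.primeCounting n ≤ ((Finset.Ioo n (2 * n)).filter Nat.Prime).card := by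
  obtain hn | hn := lt_or_ge n 2048
  · have := primeCounting_le_twenty_mul_card_primes_Ioo_of_lt hn
    rify at this
    linarith
  · exact mul_primeCounting_le_card_primes_Ioo_of_le hn

/-- For every integer `n ≥ 620634`, the number of primes in `(n, 2n)` is at
least `⌊0.05 · π(n)⌋`. -/
theorem stmt_16 (n : ℕ) (hn : n ≥ 620634) :
    ⌊(0.05 : ℝ) * (Nat.primeCounting n : ℝ)⌋ ≤
      (((Finset.Ioo n (2 * n)).filter Nat.Prime).card : ℤ) := by
  exact_mod_cast (Int.floor_le _).trans (stmt_16_general n)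
end
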